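/- arXiv:1905.08075 — 2 statements merged into one kernel-verified Lean document; each statement's English description precedes it below -/
import Mathlib

section
/- A set X ⊆ ℕ is small if and only if its upper Buck density 𝔟*(X) is zero. -/
open Set Filter Topology

/-- An upper quasi-density on ℕ. -/
def IsUpperQuasiDensity (μ : Set ℕ → ℝ) : Prop :=
  μ Set.univ = 1 ∧
  (∀ X : Set ℕ, μ X ≤ 1) ∧
  (∀ X Y : Set ℕ, μ (X ∪ Y) ≤ μ X + μ Y) ∧
  (∀ (X : Set ℕ) (k : ℕ), 0 < k → μ ((fun x => k * x) '' X) = μ X / k) ∧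
  (∀ (X : Set ℕ) (h : ℕ), μ ((fun x => x + h) '' X) = μ X)

/-- An upper density on ℕ: a monotone upper quasi-density. -/
def IsUpperDensity (μ : Set ℕ → ℝ) : Prop :=
  IsUpperQuasiDensity μ ∧ ∀ X Y : Set ℕ, X ⊆ Y → μ X ≤ μ Y

/-- A set of naturals is small if every upper quasi-density vanishes on it. -/
def SmallSet (X : Set ℕ) : Prop :=
  ∀ μ : Set ℕ → ℝ, IsUpperQuasiDensity μ → μ X = 0

/-- The upper asymptotic density of a set of naturals. -/
noncomputable def upperAsymptoticDensity (X : Set ℕ) : ℝ :=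
  limsup (fun n : ℕ => ((X ∩ Set.Icc 1 n).ncard : ℝ) / n) atTop

/-- The arithmetic progression k·ℕ + h. -/
def AP (k h : ℕ) : Set ℕ := {x : ℕ | ∃ m : ℕ, x = k * m + h}

/-- A finite union of arithmetic progressions of ℕ. -/
def IsFinUnionAP (A : Set ℕ) : Prop :=
  ∃ s : Finset (ℕ × ℕ), (∀ p ∈ s, 0 < p.1) ∧ A = ⋃ p ∈ s, AP p.1 p.2

/-- The upper Buck density of a set of naturals. -/
noncomputable def buckDensity (X : Set ℕ) : ℝ :=
  sInf {d : ℝ | ∃ A : Set ℕ, IsFinUnionAP A ∧ X ⊆ A ∧ d = upperAsymptoticDensity A}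

/-- `rk k X` is the number of residues h ∈ [0, k-1] with X ∩ (k·ℕ + h) ≠ ∅. -/
noncomputable def rk (k : ℕ) (X : Set ℕ) : ℕ :=
  {h : ℕ | h < k ∧ (X ∩ AP k h).Nonempty}.ncard

/-- `wk μ k S` is the number of residues h ∈ [0, k-1] with μ(S ∩ (k·ℕ + h)) ≠ 0. -/
noncomputable def wk (μ : Set ℕ → ℝ) (k : ℕ) (S : Set ℕ) : ℕ :=
  {h : ℕ | h < k ∧ μ (S ∩ AP k h) ≠ 0}.ncard

/-- number of residues mod `k` hit by `X` -/
noncomputable def rho (k : ℕ) (X : Set ℕ) : ℕ := ((fun x => x % k) '' X).ncard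

lemma rho_finite {k : ℕ} (hk : 0 < k) (X : Set ℕ) : ((fun x => x % k) '' X).Finite := by
  apply (Set.finite_Iio k).subset
  rintro _ ⟨x, _, rfl⟩
  exact Nat.mod_lt _ hk

lemma rho_mono {k : ℕ} (hk : 0 < k) {X Y : Set ℕ} (h : X ⊆ Y) : rho k X ≤ rho k Y :=
  Set.ncard_le_ncard (Set.image_mono h) (rho_finite hk Y)

lemma rho_union (k : ℕ) (X Y : Set ℕ) : rho k (X ∪ Y) ≤ rho k X + rho k Y := by
  unfold rho
  rw [Set.image_union]
  exact Set.ncard_union_le _ _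

lemma rho_le {k : ℕ} (hk : 0 < k) (X : Set ℕ) : rho k X ≤ k := by
  have h : ((fun x => x % k) '' X) ⊆ Set.Iio k := by
    rintro _ ⟨x, _, rfl⟩
    exact Nat.mod_lt _ hk
  have := Set.ncard_le_ncard h (Set.finite_Iio k)
  simpa [rho, Set.ncard_eq_toFinset_card'] using this

lemma rho_univ {k : ℕ} : rho k Set.univ = k ∨ k = 0 := by
  rcases Nat.eq_zero_or_pos k with h | hk
  · exact Or.inr h
  left
  have h : ((fun x => x % k) '' Set.univ) = Set.Iio k := by
    ext y
    constructor
    · rintro ⟨x, _, rfl⟩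
      exact Nat.mod_lt _ hk
    · intro hy
      exact ⟨y, trivial, Nat.mod_eq_of_lt hy⟩
  rw [rho, h]
  simp [Set.ncard_eq_toFinset_card']

lemma rho_shift {k : ℕ} (hk : 0 < k) (X : Set ℕ) (h : ℕ) :
    rho k ((fun x => x + h) '' X) = rho k X := by
  have e : (fun x => x % k) '' ((fun x => x + h) '' X)
      = (fun y => (y + h) % k) '' ((fun x => x % k) '' X) := by
    rw [Set.image_image, Set.image_image]
    apply Set.image_congr
    intro x _
    simp
  unfold rho
  rw [e]
  apply Set.ncard_image_of_injOn
  rintro _ ⟨x, _, rfl⟩ _ ⟨y, _, rfl⟩ hxy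
  have h1 : (x % k) ≡ (y % k) [MOD k] := Nat.ModEq.add_right_cancel' h hxy
  simpa [Nat.ModEq] using h1

lemma rho_scale {m k : ℕ} (hm : 0 < m) (X : Set ℕ) :
    rho (m * k) ((fun x => m * x) '' X) = rho k X := by
  have e : (fun x => x % (m * k)) '' ((fun x => m * x) '' X)
      = (fun y => m * y) '' ((fun x => x % k) '' X) := by
    rw [Set.image_image, Set.image_image]
    apply Set.image_congr
    intro x _
    simp [Nat.mul_mod_mul_left]
  unfold rho
  rw [e]
  apply Set.ncard_image_of_injective
  intro a b hab
  exact Nat.eq_of_mul_eq_mul_left hm hab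

lemma rho_mul {m k : ℕ} (hm : 0 < m) (hk : 0 < k) (X : Set ℕ) :
    rho (m * k) X ≤ m * rho k X := by
  have h : (fun x => x % (m * k)) '' X ⊆
      (fun p : ℕ × ℕ => k * p.1 + p.2) '' (Set.Iio m ×ˢ ((fun x => x % k) '' X)) := by
    rintro _ ⟨x, hx, rfl⟩
    refine ⟨((x % (m * k)) / k, x % k), ⟨?_, x, hx, rfl⟩, ?_⟩
    · exact Nat.div_lt_of_lt_mul (by rw [mul_comm k m]; exact Nat.mod_lt _ (Nat.mul_pos hm hk))
    · have : x % (m * k) % k = x % k := Nat.mod_mod_of_dvd _ (Dvd.intro_left m rfl)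
      simp only
      conv_lhs => rw [← this]
      exact Nat.div_add_mod _ _
  have hf : (Set.Iio m ×ˢ ((fun x => x % k) '' X)).Finite :=
    (Set.finite_Iio m).prod (rho_finite hk X)
  calc rho (m * k) X ≤ _ := Set.ncard_le_ncard h (hf.image _)
    _ ≤ _ := Set.ncard_image_le hf
    _ = _ := by
      rw [Set.ncard_prod]
      simp [rho, Set.ncard_eq_toFinset_card' (Set.Iio m)]

lemma rho_div_mul {m k : ℕ} (hm : 0 < m) (hk : 0 < k) (X : Set ℕ) :
    (rho (m * k) X : ℝ) / ((m * k : ℕ) : ℝ) ≤ (rho k X : ℝ) / k := by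
  have h : (rho (m * k) X : ℝ) ≤ m * rho k X := by exact_mod_cast rho_mul hm hk X
  have hm' : (0 : ℝ) < m := by exact_mod_cast hm
  have hk' : (0 : ℝ) < k := by exact_mod_cast hk
  push_cast
  rw [div_le_div_iff₀ (by positivity) hk']
  nlinarith

lemma dens_bdd (A : Set ℕ) (n : ℕ) : ((A ∩ Set.Icc 1 n).ncard : ℝ) / n ≤ 1 := by
  apply div_le_one_of_le₀ _ (Nat.cast_nonneg n)
  have := Set.ncard_le_ncard (Set.inter_subset_right : A ∩ Set.Icc 1 n ⊆ Set.Icc 1 n)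
    (Set.finite_Icc 1 n)
  rw [Set.ncard_eq_toFinset_card' (Set.Icc 1 n)] at this
  simp at this
  exact_mod_cast this

lemma tend_aux (a b : ℝ) : Tendsto (fun n : ℕ => a + b / (n : ℝ)) atTop (𝓝 a) := by
  simpa using (tendsto_const_nhds (x := a)).add (tendsto_const_div_atTop_nhds_zero_nat b)

lemma dens_ge {A : Set ℕ} {K : ℕ} (hK : 0 < K) (hA : ∀ a ∈ A, ∀ j, a + K * j ∈ A) :
    (rho K A : ℝ) / K ≤ upperAsymptoticDensity A := by
  -- uniform bound on representatives
  obtain ⟨M, hM1, hM⟩ : ∃ M : ℕ, 1 ≤ M ∧ ∀ r ∈ ((fun x => x % K) '' A), ∃ a ∈ A,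
      a % K = r ∧ a ≤ M := by
    have : ∀ r : ℕ, ∃ a : ℕ, r ∈ ((fun x => x % K) '' A) → a ∈ A ∧ a % K = r := by
      intro r
      by_cases hr : r ∈ ((fun x => x % K) '' A)
      · obtain ⟨a, ha, h⟩ := hr
        exact ⟨a, fun _ => ⟨ha, h⟩⟩
      · exact ⟨0, fun h => absurd h hr⟩
    choose f hf using this
    obtain ⟨M, hM⟩ := ((rho_finite hK A).image f).bddAbove
    refine ⟨M + 1, by omega, fun r hr => ⟨f r, (hf r hr).1, (hf r hr).2, ?_⟩⟩
    have := hM (Set.mem_image_of_mem f hr)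
    omega
  have count : ∀ n : ℕ, (n / K - M) * rho K A ≤ (A ∩ Set.Icc 1 n).ncard := by
    intro n
    have hf : (Set.Ico M (n / K) ×ˢ ((fun x => x % K) '' A)).Finite :=
      (Set.finite_Ico _ _).prod (rho_finite hK A)
    have hsub : (fun p : ℕ × ℕ => K * p.1 + p.2) ''
        (Set.Ico M (n / K) ×ˢ ((fun x => x % K) '' A)) ⊆ A ∩ Set.Icc 1 n := by
      rintro _ ⟨⟨j, r⟩, ⟨hj, hr⟩, rfl⟩
      simp only [Set.mem_Ico] at hj hr ⊢
      obtain ⟨a, ha, har, haM⟩ := hM r hr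
      have hrK : r < K := by rw [← har]; exact Nat.mod_lt _ hK
      have hq := Nat.div_add_mod a K
      have hqa : a / K ≤ j := (Nat.div_le_self a K).trans (haM.trans hj.1)
      have h2 : K * (j + 1) ≤ n := by
        calc K * (j + 1) ≤ K * (n / K) := Nat.mul_le_mul_left _ hj.2
          _ ≤ n := Nat.mul_div_le n K
      have h3 : K * 1 ≤ K * j := Nat.mul_le_mul_left _ (by omega)
      refine ⟨?_, ?_, ?_⟩
      · have := hA a ha (j - a / K)
        convert this using 1
        obtain ⟨t, ht⟩ := Nat.exists_eq_add_of_le hqa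
        rw [ht, Nat.add_sub_cancel_left, mul_add]
        omega
      · omega
      · rw [mul_add] at h2; omega
    have hinj : Set.InjOn (fun p : ℕ × ℕ => K * p.1 + p.2)
        (Set.Ico M (n / K) ×ˢ ((fun x => x % K) '' A)) := by
      rintro ⟨j, r⟩ ⟨_, hr⟩ ⟨j', r'⟩ ⟨_, hr'⟩ heq
      obtain ⟨x, _, rfl⟩ := hr
      obtain ⟨x', _, rfl⟩ := hr'
      simp only at heq ⊢
      have e1 := congrArg (· % K) heq
      simp [Nat.mul_add_mod] at e1
      rw [e1] at heq ⊢
      have := Nat.eq_of_mul_eq_mul_left hK (Nat.add_right_cancel heq)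
      rw [this]
    have h1 := Set.ncard_le_ncard hsub ((Set.finite_Icc 1 n).inter_of_right A)
    rw [Set.ncard_image_of_injOn hinj, Set.ncard_prod,
      Set.ncard_eq_toFinset_card' (Set.Ico M (n / K))] at h1
    simpa [rho] using h1
  have ht := tend_aux ((rho K A : ℝ) / K) (-((1 + M) * rho K A))
  rw [← ht.limsup_eq]
  unfold upperAsymptoticDensity
  apply Filter.limsup_le_limsup
  · filter_upwards [eventually_gt_atTop 0] with n hn
    have hn' : (0 : ℝ) < n := by exact_mod_cast hn
    have hK' : (0 : ℝ) < K := by exact_mod_cast hK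
    have hc : (((n / K : ℕ) : ℝ) - M) * rho K A ≤ ((A ∩ Set.Icc 1 n).ncard : ℝ) := by
      have h1 : (((n / K - M : ℕ) : ℝ)) * rho K A ≤ ((A ∩ Set.Icc 1 n).ncard : ℝ) := by
        exact_mod_cast count n
      refine le_trans ?_ h1
      apply mul_le_mul_of_nonneg_right _ (Nat.cast_nonneg _)
      rw [sub_le_iff_le_add]
      exact_mod_cast (by omega : n / K ≤ n / K - M + M)
    have hd : (n : ℝ) / K - 1 ≤ ((n / K : ℕ) : ℝ) := by
      have := Nat.lt_div_mul_add (a := n) hK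
      rw [sub_le_iff_le_add, div_le_iff₀ hK']
      have h' : (n : ℝ) < ((n / K : ℕ) : ℝ) * K + K := by exact_mod_cast this
      linarith
    rw [le_div_iff₀ hn']
    have e : ((rho K A : ℝ) / K + -((1 + M) * rho K A) / n) * n
        = ((n : ℝ) / K - 1 - M) * rho K A := by
      field_simp
      ring
    rw [e]
    refine le_trans ?_ hc
    apply mul_le_mul_of_nonneg_right _ (Nat.cast_nonneg _)
    linarith
  · exact ht.isBoundedUnder_ge.isCoboundedUnder_le
  · exact isBoundedUnder_of ⟨1, fun n => dens_bdd A n⟩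

lemma dens_le {K : ℕ} (hK : 0 < K) (X : Set ℕ) :
    upperAsymptoticDensity {x | x % K ∈ (fun x => x % K) '' X} ≤ (rho K X : ℝ) / K := by
  set A := {x | x % K ∈ (fun x => x % K) '' X} with hA
  have count : ∀ n : ℕ, (A ∩ Set.Icc 1 n).ncard ≤ (n / K + 1) * rho K X := by
    intro n
    have hf : (Set.Iio (n / K + 1) ×ˢ ((fun x => x % K) '' X)).Finite :=
      (Set.finite_Iio _).prod (rho_finite hK X)
    have hsub : A ∩ Set.Icc 1 n ⊆ (fun p : ℕ × ℕ => K * p.1 + p.2) ''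
        (Set.Iio (n / K + 1) ×ˢ ((fun x => x % K) '' X)) := by
      rintro x ⟨hx, hx1, hxn⟩
      refine ⟨(x / K, x % K), ⟨?_, hx⟩, Nat.div_add_mod _ _⟩
      exact Nat.lt_succ_of_le (Nat.div_le_div_right hxn)
    have h1 := (Set.ncard_le_ncard hsub (hf.image _)).trans (Set.ncard_image_le hf)
    rw [Set.ncard_prod, Set.ncard_eq_toFinset_card' (Set.Iio (n / K + 1))] at h1
    simpa [rho] using h1
  have ht := tend_aux ((rho K X : ℝ) / K) (rho K X)
  rw [← ht.limsup_eq]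
  unfold upperAsymptoticDensity
  apply Filter.limsup_le_limsup
  · filter_upwards [eventually_gt_atTop 0] with n hn
    have hn' : (0 : ℝ) < n := by exact_mod_cast hn
    have hc : ((A ∩ Set.Icc 1 n).ncard : ℝ) ≤ (((n / K : ℕ) : ℝ) + 1) * rho K X := by
      exact_mod_cast count n
    have hd : ((n / K : ℕ) : ℝ) ≤ (n : ℝ) / K := Nat.cast_div_le
    rw [div_le_iff₀ hn']
    have e : ((rho K X : ℝ) / K + (rho K X) / n) * n = ((n : ℝ) / K + 1) * rho K X := by
      have hK' : (0 : ℝ) < K := by exact_mod_cast hK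
      field_simp
    rw [e]
    refine hc.trans ?_
    apply mul_le_mul_of_nonneg_right _ (Nat.cast_nonneg _)
    linarith
  · apply Filter.IsBoundedUnder.isCoboundedUnder_le
    exact isBoundedUnder_of ⟨0, fun n => by positivity⟩
  · exact ht.isBoundedUnder_le

lemma finUnion_period {A : Set ℕ} (hA : IsFinUnionAP A) :
    ∃ K : ℕ, 0 < K ∧ ∀ a ∈ A, ∀ j, a + K * j ∈ A := by
  obtain ⟨s, hs, rfl⟩ := hA
  refine ⟨∏ p ∈ s, p.1, Finset.prod_pos hs, ?_⟩
  intro a ha j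
  simp only [Set.mem_iUnion] at ha ⊢
  obtain ⟨p, hp, m, rfl⟩ := ha
  obtain ⟨t, ht⟩ := Finset.dvd_prod_of_mem (fun p : ℕ × ℕ => p.1) hp
  refine ⟨p, hp, m + t * j, ?_⟩
  rw [ht]
  ring

lemma buck_set_lb (X : Set ℕ) : ∀ d ∈ {d : ℝ | ∃ A : Set ℕ, IsFinUnionAP A ∧ X ⊆ A ∧
    d = upperAsymptoticDensity A}, 0 ≤ d := by
  rintro d ⟨A, hA, _, rfl⟩
  obtain ⟨K, hK, h⟩ := finUnion_period hA
  exact le_trans (by positivity) (dens_ge hK h)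

lemma buck_nonneg (X : Set ℕ) : 0 ≤ buckDensity X :=
  Real.sInf_nonneg (buck_set_lb X)

lemma buck_le {k : ℕ} (hk : 0 < k) (X : Set ℕ) : buckDensity X ≤ (rho k X : ℝ) / k := by
  refine le_trans (csInf_le ⟨0, buck_set_lb X⟩ ?_) (dens_le hk X)
  refine ⟨_, ⟨(rho_finite hk X).toFinset.image (fun r => (k, r)), ?_, ?_⟩, ?_, rfl⟩
  · intro p hp
    simp only [Finset.mem_image] at hp
    obtain ⟨r, _, rfl⟩ := hp
    exact hk
  · ext x
    simp only [Set.mem_iUnion, Set.mem_setOf_eq, Finset.mem_image, Set.Finite.mem_toFinset]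
    constructor
    · intro hx
      exact ⟨(k, x % k), ⟨_, hx, rfl⟩, x / k, (Nat.div_add_mod _ _).symm⟩
    · rintro ⟨p, ⟨r, hr, rfl⟩, m, rfl⟩
      obtain ⟨y, hy, rfl⟩ := hr
      exact ⟨y, hy, by simp [Nat.mul_add_mod]⟩
  · intro x hx
    exact ⟨x, hx, rfl⟩

lemma buck_approx (X : Set ℕ) {c : ℝ} (hc : buckDensity X < c) :
    ∃ k : ℕ, 0 < k ∧ (rho k X : ℝ) / k < c := by
  have hne : {d : ℝ | ∃ A : Set ℕ, IsFinUnionAP A ∧ X ⊆ A ∧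
      d = upperAsymptoticDensity A}.Nonempty := by
    refine ⟨_, Set.univ, ⟨{(1, 0)}, by simp, ?_⟩, Set.subset_univ _, rfl⟩
    ext x
    simp [AP]
  obtain ⟨d, ⟨A, hA, hXA, rfl⟩, hd⟩ := exists_lt_of_csInf_lt hne hc
  obtain ⟨K, hK, h⟩ := finUnion_period hA
  refine ⟨K, hK, lt_of_le_of_lt ?_ hd⟩
  refine le_trans ?_ (dens_ge hK h)
  have := rho_mono hK hXA
  gcongr

lemma buck_quasi : IsUpperQuasiDensity buckDensity := by
  have le1 : ∀ X, buckDensity X ≤ 1 := fun X => by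
    refine (buck_le one_pos X).trans ?_
    have := rho_le one_pos X
    simpa using this
  refine ⟨le_antisymm (le1 _) ?_, le1, ?_, ?_, ?_⟩
  · by_contra hlt
    push Not at hlt
    obtain ⟨k, hk, h⟩ := buck_approx _ hlt
    have hk' : (k : ℝ) ≠ 0 := by exact_mod_cast hk.ne'
    rw [rho_univ.resolve_right hk.ne', div_self hk'] at h
    exact lt_irrefl _ h
  · intro X Y
    apply le_of_forall_pos_le_add
    intro ε hε
    obtain ⟨k, hk, h1⟩ := buck_approx X (lt_add_of_pos_right _ (half_pos hε))
    obtain ⟨l, hl, h2⟩ := buck_approx Y (lt_add_of_pos_right _ (half_pos hε))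
    have h3 := buck_le (Nat.mul_pos hk hl) (X ∪ Y)
    have h4 : (rho (k * l) (X ∪ Y) : ℝ) ≤ rho (k * l) X + rho (k * l) Y := by
      exact_mod_cast rho_union _ X Y
    have h5 := rho_div_mul hk hl Y
    have h6 := rho_div_mul hl hk X
    rw [mul_comm l k] at h6
    have h7 : (rho (k * l) (X ∪ Y) : ℝ) / ((k * l : ℕ) : ℝ) ≤
        rho (k * l) X / ((k * l : ℕ) : ℝ) + rho (k * l) Y / ((k * l : ℕ) : ℝ) := by
      rw [← add_div]
      gcongr
    linarith
  · intro X m hm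
    have hm' : (0 : ℝ) < m := by exact_mod_cast hm
    have e : ∀ k : ℕ, (rho (m * k) ((fun x => m * x) '' X) : ℝ) / ((m * k : ℕ) : ℝ)
        = (rho k X : ℝ) / k / m := by
      intro k
      rw [rho_scale hm, div_div]
      push_cast
      rw [mul_comm (m : ℝ)]
    apply le_antisymm
    · rw [le_div_iff₀ hm']
      by_contra hlt
      push Not at hlt
      obtain ⟨k, hk, h⟩ := buck_approx X hlt
      have := buck_le (Nat.mul_pos hm hk) ((fun x => m * x) '' X)
      rw [e, le_div_iff₀ hm'] at this
      linarith
    · by_contra hlt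
      push Not at hlt
      obtain ⟨k, hk, h⟩ := buck_approx _ hlt
      have h1 := rho_div_mul hm hk ((fun x => m * x) '' X)
      rw [e] at h1
      have h2 := div_le_div_of_nonneg_right (buck_le hk X) hm'.le
      linarith
  · intro X h
    apply le_antisymm
    · by_contra hlt
      push Not at hlt
      obtain ⟨k, hk, h1⟩ := buck_approx _ hlt
      have := buck_le hk ((fun x => x + h) '' X)
      rw [rho_shift hk] at this
      linarith
    · by_contra hlt
      push Not at hlt
      obtain ⟨k, hk, h1⟩ := buck_approx _ hlt
      have := buck_le hk X
      rw [rho_shift hk] at h1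
      linarith

lemma quasi_nonneg {μ : Set ℕ → ℝ} (hμ : IsUpperQuasiDensity μ) (X : Set ℕ) : 0 ≤ μ X := by
  have := hμ.2.2.1 X X
  rw [Set.union_self] at this
  linarith

lemma quasi_residue {μ : Set ℕ → ℝ} (hμ : IsUpperQuasiDensity μ) {k : ℕ} (hk : 0 < k)
    (X : Set ℕ) (r : ℕ) : μ {x ∈ X | x % k = r} ≤ 1 / k := by
  obtain ⟨_, h1, _, hs, ht⟩ := hμ
  have e : {x ∈ X | x % k = r} =
      (fun x => x + r) '' ((fun x => k * x) '' {y | k * y + r ∈ X ∧ (k * y + r) % k = r}) := by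
    rw [Set.image_image]
    ext x
    constructor
    · rintro ⟨hx, rfl⟩
      refine ⟨x / k, ?_, Nat.div_add_mod _ _⟩
      simp only [Set.mem_setOf_eq, Nat.div_add_mod]
      exact ⟨hx, trivial⟩
    · rintro ⟨y, hy, rfl⟩
      exact hy
  rw [e, ht, hs _ _ hk]
  gcongr
  exact h1 _

lemma quasi_finite {μ : Set ℕ → ℝ} (hμ : IsUpperQuasiDensity μ) {k : ℕ} (hk : 0 < k)
    (X : Set ℕ) (R : Finset ℕ) : μ {x ∈ X | x % k ∈ R} ≤ R.card / k := by
  induction R using Finset.induction_on with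
  | empty =>
    have h := hμ.2.2.2.1 ∅ 2 (by norm_num)
    simp only [Set.image_empty] at h
    push_cast at h
    simp
    linarith
  | insert a R ha ih =>
    have e : {x ∈ X | x % k ∈ insert a R} = {x ∈ X | x % k = a} ∪ {x ∈ X | x % k ∈ R} := by
      ext x
      simp only [Set.mem_setOf_eq, Finset.mem_insert, Set.mem_union]
      tauto
    rw [e, Finset.card_insert_of_notMem ha]
    have h1 := hμ.2.2.1 {x ∈ X | x % k = a} {x ∈ X | x % k ∈ R}
    have h2 := quasi_residue hμ hk X a
    push_cast
    rw [add_div]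
    linarith

lemma quasi_le_rho {μ : Set ℕ → ℝ} (hμ : IsUpperQuasiDensity μ) {k : ℕ} (hk : 0 < k)
    (X : Set ℕ) : μ X ≤ (rho k X : ℝ) / k := by
  have h := quasi_finite hμ hk X (rho_finite hk X).toFinset
  have e : {x ∈ X | x % k ∈ (rho_finite hk X).toFinset} = X := by
    ext x
    simp only [Set.mem_setOf_eq, Set.Finite.mem_toFinset, and_iff_left_iff_imp]
    exact fun hx => ⟨x, hx, rfl⟩
  rw [e, ← Set.ncard_eq_toFinset_card _ (rho_finite hk X)] at h
  exact h

/-- A set X ⊆ ℕ is small if and only if its upper Buck density is zero. -/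
theorem smallSet_iff_buckDensity_eq_zero (X : Set ℕ) :
    SmallSet X ↔ buckDensity X = 0 := by
  constructor
  · intro h
    exact h _ buck_quasi
  · intro h μ hμ
    apply le_antisymm _ (quasi_nonneg hμ X)
    by_contra hlt
    push Not at hlt
    rw [← h] at hlt
    obtain ⟨k, hk, h1⟩ := buck_approx X hlt
    have := quasi_le_rho hμ hk X
    linarith
end

section
/- Let a, b, c ∈ ℕ with a c ≠ 0 and suppose b² − 4ac = q² for some positive integer q. Set X := { a x² + b x y + c y² : x, y ∈ ℕ }. Then the upper asymptotic density of X is zero, d*(X) = 0, while the upper Buck density of X satisfies 𝔟*(X) ≥ 1/(4 a q) > 0. -/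
open Set Filter Topology

/-- Number of elements of `P` dividing `n`. -/
noncomputable def omP (P : Finset ℕ) (n : ℕ) : ℝ := ∑ p ∈ P, if p ∣ n then (1 : ℝ) else 0

noncomputable def recipP (P : Finset ℕ) : ℝ := ∑ p ∈ P, (1 : ℝ) / p

lemma sum_dvd_eq (M d : ℕ) :
    ∑ n ∈ Finset.Ioc 0 M, (if d ∣ n then (1 : ℝ) else 0) = ((M / d : ℕ) : ℝ) := by
  rw [Finset.sum_boole, Nat.Ioc_filter_dvd_card_eq_div]

lemma turan_sum (P : Finset ℕ) (hP : ∀ p ∈ P, p.Prime) (M : ℕ) (hM : 2 * P.card ≤ M) :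
    ∑ n ∈ Finset.Ioc 0 M, (omP P n - recipP P) ^ 2 ≤ 2 * M * recipP P := by
  have hE0 : 0 ≤ recipP P := Finset.sum_nonneg (fun p _ => by positivity)
  have h1 : (M : ℝ) * recipP P - P.card ≤ ∑ n ∈ Finset.Ioc 0 M, omP P n := by
    unfold omP recipP
    rw [Finset.sum_comm, Finset.mul_sum, Finset.card_eq_sum_ones]
    push_cast
    rw [← Finset.sum_sub_distrib]
    apply Finset.sum_le_sum
    intro p hp
    rw [sum_dvd_eq]
    have hp0 : (0 : ℝ) < p := by exact_mod_cast (hP p hp).pos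
    have := Nat.lt_div_mul_add (a := M) (hP p hp).pos
    have h' : (M : ℝ) < (M / p : ℕ) * p + p := by exact_mod_cast this
    rw [mul_one_div, sub_le_iff_le_add, div_le_iff₀ hp0]
    linarith
  have h2 : ∑ n ∈ Finset.Ioc 0 M, omP P n ^ 2 ≤ M * recipP P ^ 2 + M * recipP P := by
    have e1 : ∑ n ∈ Finset.Ioc 0 M, omP P n ^ 2 = ∑ p ∈ P, ∑ r ∈ P, ∑ n ∈ Finset.Ioc 0 M,
        ((if p ∣ n then (1 : ℝ) else 0) * (if r ∣ n then (1 : ℝ) else 0)) := by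
      unfold omP
      simp_rw [sq, Finset.sum_mul_sum]
      rw [Finset.sum_comm]
      refine Finset.sum_congr rfl fun p _ => ?_
      rw [Finset.sum_comm]
    have e2 : M * recipP P ^ 2 + M * recipP P = ∑ p ∈ P, ∑ r ∈ P,
        (M * ((1 : ℝ) / p * (1 / r)) + if p = r then M * ((1 : ℝ) / p) else 0) := by
      simp_rw [Finset.sum_add_distrib, ← Finset.mul_sum]
      rw [← Finset.sum_mul, ← sq]
      congr 1
      rw [recipP, Finset.mul_sum]
      refine Finset.sum_congr rfl fun p hp => ?_
      simp [hp]
    rw [e1, e2]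
    refine Finset.sum_le_sum fun p hp => Finset.sum_le_sum fun r hr => ?_
    have hp0 : (0 : ℝ) < p := by exact_mod_cast (hP p hp).pos
    have hr0 : (0 : ℝ) < r := by exact_mod_cast (hP r hr).pos
    by_cases hpr : p = r
    · subst hpr
      have : ∀ n, (if p ∣ n then (1 : ℝ) else 0) * (if p ∣ n then (1 : ℝ) else 0)
          = if p ∣ n then (1 : ℝ) else 0 := by intro n; split_ifs <;> simp
      simp_rw [this]
      rw [sum_dvd_eq]
      have h3 : ((M / p : ℕ) : ℝ) ≤ M / p := Nat.cast_div_le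
      have h4 : (0 : ℝ) ≤ M * ((1 : ℝ) / p * (1 / p)) := by positivity
      simp only [if_true]
      rw [mul_one_div (M : ℝ) (p : ℝ)]
      linarith
    · have hc : Nat.Coprime p r := (Nat.coprime_primes (hP p hp) (hP r hr)).2 hpr
      have : ∀ n, (if p ∣ n then (1 : ℝ) else 0) * (if r ∣ n then (1 : ℝ) else 0)
          = if p * r ∣ n then (1 : ℝ) else 0 := by
        intro n
        by_cases h : p * r ∣ n
        · have ha : p ∣ n := (Dvd.intro _ rfl).trans h
          have hb : r ∣ n := (Dvd.intro_left _ rfl).trans h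
          simp [h, ha, hb]
        · by_cases ha : p ∣ n
          · have hb : ¬ r ∣ n := fun hb => h (hc.mul_dvd_of_dvd_of_dvd ha hb)
            simp [h, hb]
          · simp [h, ha]
      simp_rw [this]
      rw [sum_dvd_eq, if_neg hpr, add_zero]
      have h3 : ((M / (p * r) : ℕ) : ℝ) ≤ M / ((p * r : ℕ) : ℝ) := Nat.cast_div_le
      refine h3.trans (le_of_eq ?_)
      push_cast
      field_simp
  have e : ∑ n ∈ Finset.Ioc 0 M, (omP P n - recipP P) ^ 2 =
      ∑ n ∈ Finset.Ioc 0 M, omP P n ^ 2 - 2 * recipP P * ∑ n ∈ Finset.Ioc 0 M, omP P n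
        + M * recipP P ^ 2 := by
    rw [Finset.mul_sum, ← Finset.sum_sub_distrib]
    have : (M : ℝ) * recipP P ^ 2 = ∑ n ∈ Finset.Ioc 0 M, recipP P ^ 2 := by simp
    rw [this, ← Finset.sum_add_distrib]
    exact Finset.sum_congr rfl fun n _ => by ring
  have hM' : 2 * (P.card : ℝ) ≤ M := by exact_mod_cast hM
  rw [e]
  nlinarith [mul_le_mul_of_nonneg_left h1 hE0, mul_le_mul_of_nonneg_left hM' hE0]

lemma cheb {α : Type*} (s t : Finset α) (hts : t ⊆ s) (g : α → ℝ) (h0 : ∀ x ∈ s, 0 ≤ g x)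
    (τ B : ℝ) (hB : ∑ x ∈ s, g x ≤ B) (ht : ∀ x ∈ t, τ ≤ g x) : t.card * τ ≤ B := by
  calc (t.card : ℝ) * τ = ∑ x ∈ t, τ := by simp
    _ ≤ ∑ x ∈ t, g x := Finset.sum_le_sum ht
    _ ≤ ∑ x ∈ s, g x := Finset.sum_le_sum_of_subset_of_nonneg hts fun x hx _ => h0 x hx
    _ ≤ B := hB

noncomputable def comP (P : Finset ℕ) (z : ℕ × ℕ) : ℝ :=
  ∑ p ∈ P, (if p ∣ z.1 then (1 : ℝ) else 0) * (if p ∣ z.2 then (1 : ℝ) else 0)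

lemma omP_mul (P : Finset ℕ) (hP : ∀ p ∈ P, p.Prime) (u v : ℕ) :
    omP P (u * v) = omP P u + omP P v - comP P (u, v) := by
  unfold omP comP
  rw [← Finset.sum_add_distrib, ← Finset.sum_sub_distrib]
  refine Finset.sum_congr rfl fun p hp => ?_
  simp only [(hP p hp).dvd_mul]
  by_cases h1 : p ∣ u <;> by_cases h2 : p ∣ v <;> simp [h1, h2]

lemma com_sum (P : Finset ℕ) (hP : ∀ p ∈ P, p.Prime) (M : ℕ) :
    ∑ z ∈ Finset.Ioc 0 M ×ˢ Finset.Ioc 0 M, comP P z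
      ≤ (∑' n : ℕ, (1 : ℝ) / (n : ℝ) ^ 2) * (M : ℝ) ^ 2 := by
  have hs : Summable (fun n : ℕ => (1 : ℝ) / (n : ℝ) ^ 2) :=
    Real.summable_one_div_nat_pow.2 (by norm_num)
  unfold comP
  rw [Finset.sum_comm]
  calc _ ≤ ∑ p ∈ P, (1 : ℝ) / (p : ℝ) ^ 2 * (M : ℝ) ^ 2 := by
        refine Finset.sum_le_sum fun p hp => ?_
        rw [Finset.sum_product]
        simp only
        rw [← Finset.sum_mul_sum (Finset.Ioc 0 M) (Finset.Ioc 0 M)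
          (fun n => if p ∣ n then (1 : ℝ) else 0) (fun n => if p ∣ n then (1 : ℝ) else 0), sum_dvd_eq]
        have h3 : ((M / p : ℕ) : ℝ) ≤ M / p := Nat.cast_div_le
        calc ((M / p : ℕ) : ℝ) * ((M / p : ℕ) : ℝ) ≤ (M / p : ℝ) * (M / p) := by gcongr
          _ = _ := by ring
    _ = (∑ p ∈ P, (1 : ℝ) / (p : ℝ) ^ 2) * (M : ℝ) ^ 2 := by rw [Finset.sum_mul]
    _ ≤ _ := by
        gcongr
        exact hs.sum_le_tsum P fun n _ => by positivity

def mulTable (M : ℕ) : Finset ℕ :=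
  (Finset.Ioc 0 M ×ˢ Finset.Ioc 0 M).image fun z => z.1 * z.2

lemma mulTable_card (P : Finset ℕ) (hP : ∀ p ∈ P, p.Prime) (hE : 0 < recipP P)
    (M : ℕ) (hM : 2 * P.card ≤ M) :
    ((mulTable M).card : ℝ) ≤
      (264 + 4 * ∑' n : ℕ, (1 : ℝ) / (n : ℝ) ^ 2) * (M : ℝ) ^ 2 / recipP P := by
  classical
  set E := recipP P with hEdef
  set C := ∑' n : ℕ, (1 : ℝ) / (n : ℝ) ^ 2 with hC
  set I := Finset.Ioc 0 M with hI
  have hMM : 2 * P.card ≤ M ^ 2 := hM.trans (by nlinarith [Nat.zero_le M, Nat.le_self_pow (n := 2) (by norm_num) M])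
  let T1 := (Finset.Ioc 0 (M ^ 2)).filter fun m => 3 / 2 * E ≤ omP P m
  let T2 := I.filter fun u => omP P u ≤ 7 / 8 * E
  let T3 := (I ×ˢ I).filter fun z => E / 4 ≤ comP P z
  have hsub : mulTable M ⊆ T1 ∪ ((T2 ×ˢ I ∪ I ×ˢ T2) ∪ T3).image fun z => z.1 * z.2 := by
    intro m hm
    obtain ⟨⟨u, v⟩, hz, rfl⟩ := Finset.mem_image.1 hm
    obtain ⟨hu, hv⟩ := Finset.mem_product.1 hz
    simp only at hu hv ⊢
    by_cases h1 : 3 / 2 * E ≤ omP P (u * v)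
    · refine Finset.mem_union_left _ (Finset.mem_filter.2 ⟨?_, h1⟩)
      rw [Finset.mem_Ioc] at hu hv
      rw [Finset.mem_Ioc]
      exact ⟨Nat.mul_pos hu.1 hv.1, by rw [sq]; exact Nat.mul_le_mul hu.2 hv.2⟩
    · refine Finset.mem_union_right _ (Finset.mem_image.2 ⟨(u, v), ?_, rfl⟩)
      by_cases h2 : omP P u ≤ 7 / 8 * E
      · exact Finset.mem_union_left _ (Finset.mem_union_left _
          (Finset.mem_product.2 ⟨Finset.mem_filter.2 ⟨hu, h2⟩, hv⟩))
      by_cases h3 : omP P v ≤ 7 / 8 * E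
      · exact Finset.mem_union_left _ (Finset.mem_union_right _
          (Finset.mem_product.2 ⟨hu, Finset.mem_filter.2 ⟨hv, h3⟩⟩))
      refine Finset.mem_union_right _ (Finset.mem_filter.2 ⟨hz, ?_⟩)
      rw [omP_mul P hP] at h1
      push Not at h1 h2 h3
      linarith
  have c1 : (T1.card : ℝ) * (E / 2) ^ 2 ≤ 2 * ((M ^ 2 : ℕ) : ℝ) * E := by
    refine cheb _ _ (Finset.filter_subset _ _) (fun n => (omP P n - E) ^ 2)
      (fun _ _ => sq_nonneg _) _ _ (turan_sum P hP _ hMM) fun x hx => ?_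
    have := (Finset.mem_filter.1 hx).2
    nlinarith
  have c2 : (T2.card : ℝ) * (E / 8) ^ 2 ≤ 2 * (M : ℝ) * E := by
    refine cheb _ _ (Finset.filter_subset _ _) (fun n => (omP P n - E) ^ 2)
      (fun _ _ => sq_nonneg _) _ _ (turan_sum P hP _ hM) fun x hx => ?_
    have := (Finset.mem_filter.1 hx).2
    nlinarith
  have c3 : (T3.card : ℝ) * (E / 4) ≤ C * (M : ℝ) ^ 2 := by
    refine cheb _ _ (Finset.filter_subset _ _) (comP P)
      (fun z _ => Finset.sum_nonneg fun p _ => by positivity) _ _ (com_sum P hP M) fun x hx => ?_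
    exact (Finset.mem_filter.1 hx).2
  have hcard : (mulTable M).card ≤ T1.card + ((T2.card * M + M * T2.card) + T3.card) := by
    refine (Finset.card_le_card hsub).trans ((Finset.card_union_le _ _).trans ?_)
    gcongr
    refine Finset.card_image_le.trans ((Finset.card_union_le _ _).trans ?_)
    gcongr
    refine (Finset.card_union_le _ _).trans ?_
    simp [Finset.card_product, hI]
  have hcard' : ((mulTable M).card : ℝ) ≤
      T1.card + ((T2.card * M + M * T2.card) + T3.card) := by exact_mod_cast hcard
  rw [le_div_iff₀ hE]
  have d1 : (T1.card : ℝ) * E ≤ 8 * (M : ℝ) ^ 2 := by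
    push_cast at c1
    refine le_of_mul_le_mul_right ?_ hE
    linarith
  have d2 : (T2.card : ℝ) * E ≤ 128 * M := by
    refine le_of_mul_le_mul_right ?_ hE
    linarith
  have d2' := mul_le_mul_of_nonneg_right d2 (Nat.cast_nonneg (α := ℝ) M)
  have := mul_le_mul_of_nonneg_right hcard' hE.le
  linarith

lemma recip_unbounded (R : ℝ) : ∃ P : Finset ℕ, (∀ p ∈ P, p.Prime) ∧ R ≤ recipP P := by
  have h := (not_summable_iff_tendsto_nat_atTop_of_nonneg (fun n => by
    unfold Set.indicator; split_ifs <;> positivity)).1 not_summable_one_div_on_primes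
  obtain ⟨n, hn⟩ := (h.eventually_ge_atTop R).exists
  refine ⟨(Finset.range n).filter Nat.Prime, fun p hp => (Finset.mem_filter.1 hp).2, hn.trans ?_⟩
  unfold recipP
  rw [Finset.sum_filter]
  refine le_of_eq (Finset.sum_congr rfl fun p _ => ?_)
  simp [Set.indicator]

lemma count_le (a b c q : ℕ) (ha : 0 < a) (hc : 0 < c)
    (hD : (b : ℤ) ^ 2 - 4 * a * c = (q : ℤ) ^ 2) (n : ℕ) :
    ({n : ℕ | ∃ x y : ℕ, n = a * x ^ 2 + b * x * y + c * y ^ 2} ∩ Set.Icc 1 n).ncard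
      ≤ (mulTable ((2 * a + b + q) * n.sqrt)).card := by
  rw [← Set.ncard_coe_finset]
  refine Set.ncard_le_ncard_of_injOn (fun m => 4 * a * m) ?_ ?_ (Finset.finite_toSet _)
  · rintro m ⟨⟨x, y, hm⟩, hm1, hmn⟩
    have hqb : q ≤ b := by
      have : q ^ 2 ≤ b ^ 2 := by
        have : (q : ℤ) ^ 2 ≤ (b : ℤ) ^ 2 := by
          have : (0 : ℤ) ≤ 4 * a * c := by positivity
          linarith
        exact_mod_cast this
      exact (Nat.pow_le_pow_iff_left (by norm_num)).1 this
    obtain ⟨e, rfl⟩ := Nat.exists_eq_add_of_le hqb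
    have hx : x ≤ n.sqrt := by
      rw [Nat.le_sqrt']
      nlinarith [Nat.zero_le ((q + e) * x * y), Nat.zero_le (c * y ^ 2), Nat.zero_le (x ^ 2)]
    have hy : y ≤ n.sqrt := by
      rw [Nat.le_sqrt']
      nlinarith [Nat.zero_le ((q + e) * x * y), Nat.zero_le (a * x ^ 2), Nat.zero_le (y ^ 2)]
    have hprod : (2 * a * x + e * y) * (2 * a * x + (2 * q + e) * y) = 4 * a * m := by
      zify
      zify at hm
      push_cast at hD
      rw [hm]
      linear_combination (y : ℤ) ^ 2 * hD
    have hpos : 0 < (2 * a * x + e * y) * (2 * a * x + (2 * q + e) * y) := by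
      rw [hprod]; positivity
    simp only [Finset.mem_coe, mulTable, Finset.mem_image, Finset.mem_product, Finset.mem_Ioc,
      Prod.exists]
    refine ⟨_, _, ⟨⟨Nat.pos_of_mul_pos_right hpos, ?_⟩, ⟨Nat.pos_of_mul_pos_left hpos, ?_⟩⟩, hprod⟩
    · calc 2 * a * x + e * y ≤ 2 * a * n.sqrt + e * n.sqrt := by gcongr
        _ ≤ _ := by nlinarith [Nat.zero_le (q * n.sqrt)]
    · calc 2 * a * x + (2 * q + e) * y ≤ 2 * a * n.sqrt + (2 * q + e) * n.sqrt := by gcongr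
        _ = _ := by ring
  · intro m _ m' _ h
    exact Nat.eq_of_mul_eq_mul_left (by positivity) h

lemma count_le_self (X : Set ℕ) (n : ℕ) : ((X ∩ Set.Icc 1 n).ncard : ℝ) / n ≤ 1 := by
  apply div_le_one_of_le₀ _ (Nat.cast_nonneg _)
  have : (X ∩ Set.Icc 1 n).ncard ≤ (Set.Icc 1 n).ncard :=
    Set.ncard_le_ncard Set.inter_subset_right (Set.finite_Icc _ _)
  have h2 : (Set.Icc 1 n).ncard = n := by
    rw [← Finset.coe_Icc, Set.ncard_coe_finset]; simp
  exact_mod_cast this.trans h2.le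

lemma upper_zero (a b c q : ℕ) (ha : 0 < a) (hc : 0 < c)
    (hD : (b : ℤ) ^ 2 - 4 * a * c = (q : ℤ) ^ 2) :
    upperAsymptoticDensity {n : ℕ | ∃ x y : ℕ, n = a * x ^ 2 + b * x * y + c * y ^ 2} = 0 := by
  unfold upperAsymptoticDensity
  apply Tendsto.limsup_eq
  set X := {n : ℕ | ∃ x y : ℕ, n = a * x ^ 2 + b * x * y + c * y ^ 2}
  set K := 2 * a + b + q with hK
  set D := 264 + 4 * ∑' n : ℕ, (1 : ℝ) / (n : ℝ) ^ 2
  have hD0 : 0 ≤ D := by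
    have : 0 ≤ ∑' n : ℕ, (1 : ℝ) / (n : ℝ) ^ 2 := tsum_nonneg fun n => by positivity
    positivity
  rw [Metric.tendsto_atTop]
  intro ε hε
  obtain ⟨P, hP, hPE⟩ := recip_unbounded ((D * K ^ 2 + 1) / ε)
  have hE : 0 < recipP P := lt_of_lt_of_le (by positivity) hPE
  refine ⟨(2 * P.card) ^ 2 + 1, fun n hn => ?_⟩
  have hsq : 2 * P.card ≤ n.sqrt := by rw [Nat.le_sqrt']; omega
  have hn0 : (0 : ℝ) < n := by
    have : 0 < n := by omega
    exact_mod_cast this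
  have h1 := mulTable_card P hP hE (K * n.sqrt) (hsq.trans (Nat.le_mul_of_pos_left _ (by omega)))
  have h2 : ((X ∩ Set.Icc 1 n).ncard : ℝ) ≤ _ :=
    (Nat.cast_le.2 (count_le a b c q ha hc hD n)).trans h1
  have h3 : ((n.sqrt : ℕ) : ℝ) ^ 2 ≤ n := by exact_mod_cast Nat.sqrt_le' n
  rw [Real.dist_eq, sub_zero, abs_of_nonneg (by positivity), div_lt_iff₀ hn0]
  refine h2.trans_lt ?_
  rw [div_lt_iff₀ hE]
  rw [div_le_iff₀ hε] at hPE
  push_cast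
  calc D * ((K : ℝ) * (n.sqrt : ℕ)) ^ 2 = D * (K : ℝ) ^ 2 * ((n.sqrt : ℕ) : ℝ) ^ 2 := by ring
    _ ≤ D * (K : ℝ) ^ 2 * n := by gcongr
    _ < (recipP P * ε) * n := by
        exact mul_lt_mul_of_pos_right (by linarith) hn0
    _ = _ := by ring

lemma buck_ge (a b c q : ℕ) (ha : 0 < a) (hc : 0 < c) (hq : 0 < q)
    (hD : (b : ℤ) ^ 2 - 4 * a * c = (q : ℤ) ^ 2) :
    (1 : ℝ) / (4 * a * q) ≤
      buckDensity {n : ℕ | ∃ x y : ℕ, n = a * x ^ 2 + b * x * y + c * y ^ 2} := by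
  unfold buckDensity
  apply le_csInf
  · refine ⟨_, Set.univ, ⟨{(1, 0)}, by simp, ?_⟩, Set.subset_univ _, rfl⟩
    ext x; simp [AP]
  rintro _ ⟨A, ⟨s, hs, rfl⟩, hXA, rfl⟩
  set A := ⋃ p ∈ s, AP p.1 p.2 with hA
  have hqb : q ≤ b := by
    have : q ^ 2 ≤ b ^ 2 := by
      have : (q : ℤ) ^ 2 ≤ (b : ℤ) ^ 2 := by
        have : (0 : ℤ) ≤ 4 * a * c := by positivity
        linarith
      exact_mod_cast this
    exact (Nat.pow_le_pow_iff_left (by norm_num)).1 this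
  obtain ⟨e, rfl⟩ := Nat.exists_eq_add_of_le hqb
  set k := ∏ p ∈ s, p.1 with hk
  have hk0 : 0 < k := Finset.prod_pos hs
  have hper : ∀ x ∈ A, ∀ j, x + k * j ∈ A := by
    intro x hx j
    simp only [hA, Set.mem_iUnion] at hx ⊢
    obtain ⟨p, hp, m, rfl⟩ := hx
    obtain ⟨w, hw⟩ : p.1 ∣ k := Finset.dvd_prod_of_mem _ hp
    exact ⟨p, hp, m + w * j, by rw [hw]; ring⟩
  let F : ℕ → ℕ := fun t => a * (1 + (k - 1) * e * t) ^ 2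
    + (q + e) * (1 + (k - 1) * e * t) * (2 * a * t) + c * (2 * a * t) ^ 2
  have hF : ∀ t, F t ∈ A := fun t => hXA ⟨_, _, rfl⟩
  have hFmod : ∀ t, F t ≡ a + 2 * a * q * t [MOD k] := by
    intro t
    obtain ⟨k', hk'⟩ : ∃ k', k = k' + 1 := ⟨k - 1, by omega⟩
    have h1 : F t = a * (1 + k' * e * t) ^ 2
      + (q + e) * (1 + k' * e * t) * (2 * a * t) + c * (2 * a * t) ^ 2 := by
      simp only [F, hk', Nat.add_sub_cancel]
    rw [h1, ← Int.natCast_modEq_iff, hk']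
    push_cast at hD ⊢
    apply Int.ModEq.symm
    rw [Int.modEq_iff_dvd]
    refine ⟨2 * a * e * t + a * e ^ 2 * t ^ 2 * (k' - 1) + 2 * a * (q + e) * e * t ^ 2, ?_⟩
    linear_combination (-(a : ℤ) * t ^ 2) * hD
  let B := ∑ t ∈ Finset.range k, F t
  have hmem : ∀ t, B ≤ a + 2 * a * q * t → a + 2 * a * q * t ∈ A := by
    intro t ht
    have hle : F (t % k) ≤ a + 2 * a * q * t :=
      (Finset.single_le_sum (f := F) (fun _ _ => Nat.zero_le _)
        (Finset.mem_range.2 (Nat.mod_lt t hk0))).trans ht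
    have hm : F (t % k) ≡ a + 2 * a * q * t [MOD k] :=
      (hFmod _).trans (((Nat.mod_modEq t k).mul_left _).add_left _)
    obtain ⟨j, hj⟩ := (Nat.modEq_iff_dvd' hle).1 hm
    have : a + 2 * a * q * t = F (t % k) + k * j := by omega
    rw [this]
    exact hper _ (hF _) _
  set d := 2 * a * q with hd
  have hd0 : 0 < d := by positivity
  unfold upperAsymptoticDensity
  refine le_limsup_of_frequently_le (Eventually.frequently ?_) ?_
  · filter_upwards [eventually_ge_atTop (2 * (a + d * B) + 1)] with n hn
    have hn0 : (0 : ℝ) < n := by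
      have : 0 < n := by omega
      exact_mod_cast this
    have hcard : n / (2 * d) + 1 ≤ (A ∩ Set.Icc 1 n).ncard := by
      have : ((Finset.range (n / (2 * d) + 1) : Finset ℕ) : Set ℕ).ncard
          ≤ (A ∩ Set.Icc 1 n).ncard := by
        refine Set.ncard_le_ncard_of_injOn (fun t => a + d * (t + B)) ?_ ?_
          ((Set.finite_Icc _ _).subset Set.inter_subset_right)
        · intro t ht
          have ht' : t ≤ n / (2 * d) := by
            have := Finset.mem_range.1 (Finset.mem_coe.1 ht); omega
          have h1 : t * (2 * d) ≤ n := (Nat.le_div_iff_mul_le (by positivity)).1 ht'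
          refine ⟨hmem _ ?_, ?_, ?_⟩
          · have : t + B ≤ d * (t + B) := Nat.le_mul_of_pos_left _ hd0
            omega
          · show 1 ≤ a + d * (t + B)
            omega
          · show a + d * (t + B) ≤ n
            nlinarith
        · intro t _ t' _ h
          simp only at h
          have := Nat.eq_of_mul_eq_mul_left hd0 (Nat.add_left_cancel h)
          omega
      simpa [Set.ncard_coe_finset] using this
    have h5 : n < (n / (2 * d) + 1) * (2 * d) := by
      have := Nat.lt_div_mul_add (a := n) (b := 2 * d) (by positivity)
      linarith
    have h6 : n ≤ (A ∩ Set.Icc 1 n).ncard * (2 * d) :=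
      h5.le.trans (Nat.mul_le_mul_right _ hcard)
    have h7 : (n : ℝ) ≤ (A ∩ Set.Icc 1 n).ncard * (4 * a * q) := by
      have : (n : ℝ) ≤ ((A ∩ Set.Icc 1 n).ncard * (2 * d) : ℕ) := by exact_mod_cast h6
      rw [hd] at this
      push_cast at this
      linarith
    have ha' : (0 : ℝ) < a := by exact_mod_cast ha
    have hq' : (0 : ℝ) < q := by exact_mod_cast hq
    rw [div_le_div_iff₀ (by positivity) hn0]
    linarith
  · exact isBoundedUnder_of ⟨1, fun n => count_le_self A n⟩

/-- If ac ≠ 0 and b² - 4ac = q² with q a positive integer, then the set X of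
values of ax² + bxy + cy² over ℕ has upper asymptotic density zero, while its
upper Buck density is at least 1/(4aq) > 0. -/
theorem quadratic_form_asymptotic_zero_buck_pos (a b c q : ℕ) (hac : a * c ≠ 0)
    (hq : 0 < q) (hD : (b : ℤ) ^ 2 - 4 * a * c = (q : ℤ) ^ 2) :
    upperAsymptoticDensity {n : ℕ | ∃ x y : ℕ, n = a * x ^ 2 + b * x * y + c * y ^ 2} = 0 ∧
    (1 : ℝ) / (4 * a * q) ≤
      buckDensity {n : ℕ | ∃ x y : ℕ, n = a * x ^ 2 + b * x * y + c * y ^ 2} ∧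
    (0 : ℝ) < 1 / (4 * a * q) := by
  have ha : 0 < a := Nat.pos_of_ne_zero fun h => hac (by simp [h])
  have hc : 0 < c := Nat.pos_of_ne_zero fun h => hac (by simp [h])
  have ha' : (0 : ℝ) < a := by exact_mod_cast ha
  have hq' : (0 : ℝ) < q := by exact_mod_cast hq
  exact ⟨upper_zero a b c q ha hc hD, buck_ge a b c q ha hc hq hD, by positivity⟩
end
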